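/- arXiv:2203.06336 — 2 statements merged into one kernel-verified Lean document; each statement's English description precedes it below -/
import Mathlib

section
/- Let s be a prime power, let a, c, e ∈ GF(s)^{n1}, and let b, d, f ∈ GF(s)^{n1·n2} be partitioned into consecutive blocks of length n2: b_1,…,b_{n1}; d_1,…,d_{n1}; f_1,…,f_{n1}. Suppose b = d = 0 (the zero vector), every block f_i is balanced, and the n1×2 matrix (a, c) is an OA(n1, 2, s, 2). Then the (n1·n2)×3 matrix (a⊛b, c⊛d, e⊛f) is an OA(n1·n2, 3, s, 3). -/
open Finset

/-- `M` (rows indexed by `R`, columns by `C`, entries in the finite field `F` with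
`s = Fintype.card F` elements) is an orthogonal array of strength `t`: for any choice of `t`
distinct columns and any `t`-tuple of symbols, the number of rows showing that tuple, times
`s ^ t`, equals the number of rows (i.e. each tuple appears exactly `(card R) / s ^ t` times). -/
def IsOA {R C F : Type*} [Fintype R] [Fintype F] [DecidableEq F]
    (M : R → C → F) (t : ℕ) : Prop :=
  ∀ cols : Fin t → C, Function.Injective cols → ∀ v : Fin t → F,
    (Finset.univ.filter fun r : R => ∀ j, M r (cols j) = v j).card
      * Fintype.card F ^ t = Fintype.card R

/-- A vector over `F` is balanced if every symbol of `F` occurs equally often among its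
entries. -/
def IsBalanced {R F : Type*} [Fintype R] [Fintype F] [DecidableEq F] (v : R → F) : Prop :=
  ∀ x : F, (Finset.univ.filter fun r : R => v r = x).card * Fintype.card F = Fintype.card R

/-- `M` is a difference scheme: for any two distinct columns, the vector of entrywise
differences contains every element of `F` equally often. -/
def IsDiffScheme {R C F : Type*} [Fintype R] [Field F] [Fintype F] [DecidableEq F]
    (M : R → C → F) : Prop :=
  ∀ j j' : C, j ≠ j' → ∀ x : F,
    (Finset.univ.filter fun r : R => M r j - M r j' = x).card * Fintype.card F
      = Fintype.card R
/-- Lemma 3(iv). -/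
theorem statement6 {F : Type} [Field F] [Fintype F] [DecidableEq F]
    {n1 n2 : ℕ}
    (a c e : Fin n1 → F) (b d f : Fin n1 → Fin n2 → F)
    (hb : ∀ i j, b i j = 0) (hd : ∀ i j, d i j = 0)
    (hf : ∀ i : Fin n1, IsBalanced (f i))
    (hac : IsOA (fun i : Fin n1 => ![a i, c i]) 2) :
    IsOA (fun p : Fin n1 × Fin n2 =>
      ![a p.1 + b p.1 p.2, c p.1 + d p.1 p.2, e p.1 + f p.1 p.2]) 3 := by
  intro cols hcols v
  obtain ⟨g, hg⟩ : ∃ g : Fin 3 → Fin 3, ∀ k, cols (g k) = k :=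
    ⟨fun k => (Finite.injective_iff_surjective.mp hcols k).choose,
      fun k => (Finite.injective_iff_surjective.mp hcols k).choose_spec⟩
  have hg' : ∀ j, g (cols j) = j := fun j => hcols (hg _)
  have h2 := hac id Function.injective_id ![v (g 0), v (g 1)]
  simp only [Fin.forall_fin_two, id, Matrix.cons_val_zero, Matrix.cons_val_one] at h2
  have key : (Finset.univ.filter fun p : Fin n1 × Fin n2 => ∀ j,
      (![a p.1 + b p.1 p.2, c p.1 + d p.1 p.2, e p.1 + f p.1 p.2] : Fin 3 → F) (cols j) = v j)
      = (Finset.univ.filter fun i : Fin n1 => a i = v (g 0) ∧ c i = v (g 1)).biUnion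
        (fun i => (Finset.univ.filter fun j : Fin n2 => f i j = v (g 2) - e i).image
          (fun j => (i, j))) := by
    ext ⟨i, j⟩
    have h1 : (∀ k, (![a i + b i j, c i + d i j, e i + f i j] : Fin 3 → F) (cols k) = v k) ↔
        ∀ k, (![a i + b i j, c i + d i j, e i + f i j] : Fin 3 → F) k = v (g k) := by
      constructor
      · intro h k
        have := h (g k)
        rwa [hg] at this
      · intro h k
        have := h (cols k)
        rwa [hg'] at this
    simp only [Finset.mem_filter, Finset.mem_univ, true_and]
    rw [h1]
    simp only [Fin.forall_fin_succ]
    simp [hb, hd, eq_sub_iff_add_eq, add_comm, and_assoc]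
  rw [key, Finset.card_biUnion]
  · have hs : ∀ i, ((Finset.univ.filter fun j : Fin n2 => f i j = v (g 2) - e i).image
          (fun j => (i, j))).card * Fintype.card F = n2 := by
      intro i
      rw [Finset.card_image_of_injective _ (Prod.mk_right_injective i)]
      simpa using hf i (v (g 2) - e i)
    rw [pow_succ', ← mul_assoc, Finset.sum_mul, Finset.sum_congr rfl (fun i _ => hs i)]
    simp only [Finset.sum_const, smul_eq_mul, Fintype.card_prod, Fintype.card_fin] at h2 ⊢
    exact (mul_right_comm _ _ _).trans (congrArg (· * n2) h2)
  · intro i _ i' _ hne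
    simp only [Function.onFun, Finset.disjoint_left, Finset.mem_image]
    rintro _ ⟨j, _, rfl⟩ ⟨j', _, h⟩
    exact hne (congrArg Prod.fst h).symm
end

section
/- Let s be a prime power. Let A be an OA(s^2, 2, s, 2), and for i = 1,…,s^2 let B_i be an OA(n2, m2, s, 2) if m2 = 2 or an OA(n2, m2, s, 3) if m2 ≥ 3. Then: (i) for every pair 1 ≤ g ≠ g' ≤ s−1, the (s^2·n2)×(4·m2) matrix (D_g, D_{g'}) is an OA(s^2·n2, 4·m2, s, 3); and (ii) for every 1 ≤ g ≤ s−1, the (s^2·n2)×(3·m2) matrix (D_g, D_s) is an OA(s^2·n2, 3·m2, s, 3). -/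
open Finset

section Helpers

lemma oa_fiber_card {V W : Type*} [AddCommGroup V] [AddCommGroup W] [Fintype V] [Fintype W]
    [DecidableEq W] (T : V →+ W) (hT : Function.Surjective T) (w : W) :
    (Finset.univ.filter fun x => T x = w).card * Fintype.card W = Fintype.card V := by
  have h1 : Fintype.card V = ∑ w' : W, (Finset.univ.filter fun x => T x = w').card := by
    rw [← Finset.card_univ]
    exact Finset.card_eq_sum_card_fiberwise (fun x _ => by simp)
  rw [h1, Finset.sum_congr rfl (fun w' _ =>
    AddMonoidHom.card_fiber_eq_of_mem_range T (hT w') (hT w))]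
  simp [mul_comm]

lemma oa_core {F : Type} [Field F] [Fintype F] [DecidableEq F] {n2 m2 k : ℕ}
    (A : Fin (Fintype.card F ^ 2) → Fin 2 → F) (hA : IsOA A 2)
    (B : Fin (Fintype.card F ^ 2) → Fin n2 → Fin m2 → F)
    (hB : ∀ i, IsOA (B i) k) (e : Fin k → Fin m2) (he : Function.Injective e)
    (T : (Fin 2 → F) × (Fin k → F) →+ (Fin 3 → F)) (hT : Function.Surjective T)
    (v : Fin 3 → F) :
    (Finset.univ.filter fun p : Fin (Fintype.card F ^ 2) × Fin n2 =>
      T (A p.1, fun q => B p.1 p.2 (e q)) = v).card * Fintype.card F ^ 3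
      = Fintype.card (Fin (Fintype.card F ^ 2) × Fin n2) := by
  have hs : 0 < Fintype.card F := Fintype.card_pos
  have hA1 : ∀ a : Fin 2 → F, (Finset.univ.filter fun i => A i = a).card = 1 := by
    intro a
    have := hA id Function.injective_id a
    simp only [id, Fintype.card_fin] at this
    have h2 : (Finset.univ.filter fun i => A i = a)
        = (Finset.univ.filter fun i => ∀ j, A i j = a j) := by
      ext i; simp [funext_iff]
    rw [h2]
    exact Nat.eq_of_mul_eq_mul_right (pow_pos hs 2) (by rw [this, one_mul])
  have hfib : ∀ w : (Fin 2 → F) × (Fin k → F),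
      (Finset.univ.filter fun p : Fin (Fintype.card F ^ 2) × Fin n2 =>
        (A p.1, fun q => B p.1 p.2 (e q)) = w).card * Fintype.card F ^ k = n2 := by
    rintro ⟨a, b⟩
    rw [Finset.card_filter, Fintype.sum_prod_type, Finset.sum_mul]
    have : ∀ i, (∑ j : Fin n2, if (A i, fun q => B i j (e q)) = (a, b) then 1 else 0)
        * Fintype.card F ^ k = if A i = a then n2 else 0 := by
      intro i
      by_cases h : A i = a
      · have := hB i e he b
        rw [Fintype.card_fin, Finset.card_filter] at this
        simp only [h, Prod.mk.injEq, true_and, if_true, funext_iff]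
        exact this
      · simp [h]
    simp only [this]
    rw [← Finset.sum_filter, Finset.sum_const, hA1, one_smul]
  have hN := oa_fiber_card T hT v
  have hsum : (Finset.univ.filter fun p : Fin (Fintype.card F ^ 2) × Fin n2 =>
      T (A p.1, fun q => B p.1 p.2 (e q)) = v).card * Fintype.card F ^ k
      = (Finset.univ.filter fun x => T x = v).card * n2 := by
    rw [Finset.card_eq_sum_card_fiberwise
      (f := fun p : Fin (Fintype.card F ^ 2) × Fin n2 => (A p.1, fun q => B p.1 p.2 (e q)))
      (t := Finset.univ.filter fun x => T x = v) (fun x hx => by simpa using hx),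
      Finset.sum_mul, Finset.sum_congr rfl (g := fun _ => n2), Finset.sum_const, smul_eq_mul]
    intro w hw
    refine Eq.trans ?_ (hfib w)
    rw [Finset.filter_filter]
    congr 2
    ext p
    simp only [Finset.mem_filter, Finset.mem_univ, true_and] at hw ⊢
    constructor
    · exact fun h => h.2
    · exact fun h => ⟨by rw [h]; exact hw, h⟩
  simp only [Fintype.card_prod, Fintype.card_pi, Finset.prod_const, Finset.card_univ,
    Fintype.card_fin] at hN ⊢
  apply Nat.eq_of_mul_eq_mul_right (pow_pos hs k)
  calc _ = (_ * Fintype.card F ^ k) * Fintype.card F ^ 3 := by ring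
    _ = _ := by rw [hsum]
    _ = (_ * Fintype.card F ^ 3) * n2 := by ring
    _ = _ := by rw [hN]
    _ = _ := by ring

lemma oa_surj {F : Type} [Field F] {m2 : ℕ}
    (α : Fin 3 → Fin 2 → F) (β : Fin 3 → F) (l : Fin 3 → Fin m2)
    (hind : ∀ c : Fin 3 → F, (∀ k, ∑ j, c j * α j k = 0) →
      (∀ x, ∑ j, (if l j = x then c j * β j else 0) = 0) → c = 0) (v : Fin 3 → F) :
    ∃ (a : Fin 2 → F) (b : Fin m2 → F), ∀ j, α j 0 * a 0 + α j 1 * a 1 + β j * b (l j) = v j := by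
  let M : Matrix (Fin 3) (Fin 2 ⊕ Fin m2) F := fun j =>
    Sum.elim (α j) (fun x => if l j = x then β j else 0)
  have hM : Function.Injective M.vecMul := by
    have : Function.Injective M.vecMulLinear := by
      rw [injective_iff_map_eq_zero]
      intro c hc
      apply hind c
      · intro k
        exact congrFun hc (Sum.inl k)
      · intro x
        have := congrFun hc (Sum.inr x)
        have h2 : ∑ j, c j * (if l j = x then β j else 0) = 0 := this
        simpa only [mul_ite, mul_zero] using h2
    exact this
  have hsurj : Function.Surjective M.mulVec := by
    have hT : Function.Injective M.transpose.mulVecLin := by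
      intro x y hxy
      apply hM
      simpa [Matrix.mulVec_transpose] using hxy
    have hr : M.rank = 3 := by
      rw [← Matrix.rank_transpose, Matrix.rank, LinearMap.finrank_range_of_inj hT]
      simp
    have : LinearMap.range M.mulVecLin = ⊤ :=
      Submodule.eq_top_of_finrank_eq (by rw [← Matrix.rank, hr]; simp)
    exact LinearMap.range_eq_top.mp this
  obtain ⟨w, hw⟩ := hsurj v
  refine ⟨fun k => w (Sum.inl k), fun x => w (Sum.inr x), fun j => ?_⟩
  rw [← hw]
  simp [M, Matrix.mulVec, dotProduct, ite_mul]

lemma oa_main {F : Type} [Field F] [Fintype F] [DecidableEq F] {n2 m2 : ℕ} (hm2 : 2 ≤ m2)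
    (A : Fin (Fintype.card F ^ 2) → Fin 2 → F) (hA : IsOA A 2)
    (B : Fin (Fintype.card F ^ 2) → Fin n2 → Fin m2 → F)
    (hB2 : m2 = 2 → ∀ i, IsOA (B i) 2)
    (hB3 : 3 ≤ m2 → ∀ i, IsOA (B i) 3)
    (α : Fin 3 → Fin 2 → F) (β : Fin 3 → F) (l : Fin 3 → Fin m2)
    (hind : ∀ c : Fin 3 → F, (∀ k, ∑ j, c j * α j k = 0) →
      (∀ x, ∑ j, (if l j = x then c j * β j else 0) = 0) → c = 0) (v : Fin 3 → F) :
    (Finset.univ.filter fun p : Fin (Fintype.card F ^ 2) × Fin n2 =>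
      ∀ j, α j 0 * A p.1 0 + α j 1 * A p.1 1 + β j * B p.1 p.2 (l j) = v j).card
        * Fintype.card F ^ 3 = Fintype.card (Fin (Fintype.card F ^ 2) × Fin n2) := by
  obtain ⟨k, hB, e, he, hl⟩ : ∃ k, (∀ i, IsOA (B i) k) ∧ ∃ e : Fin k → Fin m2,
      Function.Injective e ∧ ∀ j, ∃ q, e q = l j := by
    rcases hm2.eq_or_lt with h | h
    · subst h
      exact ⟨2, hB2 rfl, id, Function.injective_id, fun j => ⟨l j, rfl⟩⟩
    · refine ⟨3, hB3 h, ?_⟩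
      obtain ⟨s, hs, hc⟩ := Finset.exists_superset_card_eq (s := Finset.univ.image l) (n := 3)
        (Finset.card_image_le.trans (by simp)) (by rw [Fintype.card_fin]; exact h)
      refine ⟨s.orderEmbOfFin hc, (s.orderEmbOfFin hc).injective, fun j => ?_⟩
      have : l j ∈ Set.range (s.orderEmbOfFin hc) := by
        rw [Finset.range_orderEmbOfFin]
        exact hs (by simp)
      exact this
  choose q hq using hl
  let T : (Fin 2 → F) × (Fin k → F) →+ (Fin 3 → F) :=
    { toFun := fun w j => α j 0 * w.1 0 + α j 1 * w.1 1 + β j * w.2 (q j)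
      map_zero' := by ext j; simp
      map_add' := by intro x y; ext j; simp; ring }
  have hT : Function.Surjective T := by
    intro v
    obtain ⟨a, b, hab⟩ := oa_surj α β l hind v
    refine ⟨(a, fun x => b (e x)), ?_⟩
    ext j
    simp only [T, AddMonoidHom.coe_mk, ZeroHom.coe_mk, hq]
    exact hab j
  rw [← oa_core A hA B hB e he T hT v]
  congr 2
  ext p
  simp [T, funext_iff, hq]

end Helpers

set_option maxHeartbeats 4000000 in
/-- Proposition 2: `A` is an `OA(s², 2, s, 2)`, each `Bᵢ` is an
`OA(n₂, m₂, s, 2)` if `m₂ = 2` or an `OA(n₂, m₂, s, 3)` if `m₂ ≥ 3`.  For `g` among the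
nonzero elements of `F` (i.e. `g = α_g`, `1 ≤ g ≤ s−1`), `D_g` has columns
`(k, l) : Fin 2 × Fin m₂` with entries `A i k + g·(Bᵢ) j l`, and `D_s = B`.
(i) for distinct nonzero `g, g'`, `(D_g, D_{g'})` is an `OA(s²n₂, 4m₂, s, 3)`;
(ii) for nonzero `g`, `(D_g, D_s)` is an `OA(s²n₂, 3m₂, s, 3)`. -/
theorem statement12 {F : Type} [Field F] [Fintype F] [DecidableEq F]
    {n2 m2 : ℕ} (hm2 : 2 ≤ m2)
    (A : Fin (Fintype.card F ^ 2) → Fin 2 → F) (hA : IsOA A 2)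
    (B : Fin (Fintype.card F ^ 2) → Fin n2 → Fin m2 → F)
    (hB2 : m2 = 2 → ∀ i, IsOA (B i) 2)
    (hB3 : 3 ≤ m2 → ∀ i, IsOA (B i) 3) :
    (∀ g g' : F, g ≠ 0 → g' ≠ 0 → g ≠ g' →
      IsOA (fun (p : Fin (Fintype.card F ^ 2) × Fin n2)
          (col : (Fin 2 × Fin m2) ⊕ (Fin 2 × Fin m2)) =>
        Sum.elim
          (fun kl => A p.1 kl.1 + g * B p.1 p.2 kl.2)
          (fun kl => A p.1 kl.1 + g' * B p.1 p.2 kl.2)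
          col) 3)
    ∧ (∀ g : F, g ≠ 0 →
      IsOA (fun (p : Fin (Fintype.card F ^ 2) × Fin n2)
          (col : (Fin 2 × Fin m2) ⊕ Fin m2) =>
        Sum.elim
          (fun kl => A p.1 kl.1 + g * B p.1 p.2 kl.2)
          (fun l => B p.1 p.2 l)
          col) 3) := by
  constructor
  · intro g g' hg hg' hgg cols hcols v
    let kk : Fin 3 → Fin 2 := fun j => Sum.elim (fun kl => kl.1) (fun kl => kl.1) (cols j)
    let ll : Fin 3 → Fin m2 := fun j => Sum.elim (fun kl => kl.2) (fun kl => kl.2) (cols j)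
    let gg : Fin 3 → F := fun j => Sum.elim (fun _ => g) (fun _ => g') (cols j)
    have h := oa_main hm2 A hA B hB2 hB3 (fun j k => if kk j = k then 1 else 0) gg ll ?_ v
    · rw [← h]
      congr 2
      ext p
      simp only [Finset.mem_filter, Finset.mem_univ, true_and]
      refine forall_congr' fun j => ?_
      rcases hc : cols j with ⟨k, l⟩ | ⟨k, l⟩ <;> fin_cases k <;> simp [kk, ll, gg, hc]
    · intro c h1 h2
      have e01 := hcols.ne (show (0 : Fin 3) ≠ 1 by decide)
      have e02 := hcols.ne (show (0 : Fin 3) ≠ 2 by decide)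
      have e12 := hcols.ne (show (1 : Fin 3) ≠ 2 by decide)
      have k0 := h1 0
      have k1 := h1 1
      have l0 := h2 (ll 0)
      have l1 := h2 (ll 1)
      have l2 := h2 (ll 2)
      clear h1 h2
      suffices c 0 = 0 ∧ c 1 = 0 ∧ c 2 = 0 by
        ext j; fin_cases j <;> simp [this]
      simp only [Fin.sum_univ_three, kk, ll, gg] at k0 k1 l0 l1 l2
      simp only [↓reduceIte] at l0 l1 l2
      generalize c 0 = c0 at *
      generalize c 1 = c1 at *
      generalize c 2 = c2 at *
      clear hcols hB2 hB3 hA hm2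
      rcases h0 : cols 0 with ⟨a0, b0⟩ | ⟨a0, b0⟩ <;> rcases h1 : cols 1 with ⟨a1, b1⟩ | ⟨a1, b1⟩ <;>
        rcases h2 : cols 2 with ⟨a2, b2⟩ | ⟨a2, b2⟩ <;>
        simp only [Sum.elim_inl, Sum.elim_inr, ne_eq, Sum.inl.injEq, Sum.inr.injEq,
          Prod.mk.injEq, h0, h1, h2] at e01 e02 e12 k0 k1 l0 l1 l2 <;>
        clear h0 h1 h2 <;>
        fin_cases a0 <;> fin_cases a1 <;> fin_cases a2 <;> (try simp at e01 e02 e12 k0 k1 l0 l1 l2) <;> grind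
  · intro g hg cols hcols v
    let aa : Fin 3 → Fin 2 → F := fun j k =>
      Sum.elim (fun kl => if kl.1 = k then 1 else 0) (fun _ => 0) (cols j)
    let ll : Fin 3 → Fin m2 := fun j => Sum.elim (fun kl => kl.2) (fun l => l) (cols j)
    let gg : Fin 3 → F := fun j => Sum.elim (fun _ => g) (fun _ => 1) (cols j)
    have h := oa_main hm2 A hA B hB2 hB3 aa gg ll ?_ v
    · rw [← h]
      congr 2
      ext p
      simp only [Finset.mem_filter, Finset.mem_univ, true_and]
      refine forall_congr' fun j => ?_
      rcases hc : cols j with ⟨k, l⟩ | l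
      · fin_cases k <;> simp [aa, ll, gg, hc]
      · simp [aa, ll, gg, hc]
    · intro c h1 h2
      have e01 := hcols.ne (show (0 : Fin 3) ≠ 1 by decide)
      have e02 := hcols.ne (show (0 : Fin 3) ≠ 2 by decide)
      have e12 := hcols.ne (show (1 : Fin 3) ≠ 2 by decide)
      have k0 := h1 0
      have k1 := h1 1
      have l0 := h2 (ll 0)
      have l1 := h2 (ll 1)
      have l2 := h2 (ll 2)
      clear h1 h2
      suffices c 0 = 0 ∧ c 1 = 0 ∧ c 2 = 0 by
        ext j; fin_cases j <;> simp [this]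
      simp only [Fin.sum_univ_three, aa, ll, gg] at k0 k1 l0 l1 l2
      simp only [↓reduceIte] at l0 l1 l2
      generalize c 0 = c0 at *
      generalize c 1 = c1 at *
      generalize c 2 = c2 at *
      clear hcols hB2 hB3 hA hm2
      rcases h0 : cols 0 with ⟨a0, b0⟩ | b0 <;> rcases h1 : cols 1 with ⟨a1, b1⟩ | b1 <;>
        rcases h2 : cols 2 with ⟨a2, b2⟩ | b2 <;>
        simp only [Sum.elim_inl, Sum.elim_inr, ne_eq, Sum.inl.injEq, Sum.inr.injEq,
          Prod.mk.injEq, h0, h1, h2] at e01 e02 e12 k0 k1 l0 l1 l2 <;>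
        clear h0 h1 h2 <;>
        (try fin_cases a0) <;> (try fin_cases a1) <;> (try fin_cases a2) <;> (try simp at e01 e02 e12 k0 k1 l0 l1 l2) <;> grind
end
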